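/- For every integer d ≥ 0, the ℂ-vector space of homogeneous polynomials of degree d in ℂ[x,y,z] vanishing at all 15 points of Z(H₃) has dimension C(d+2,2) − min(C(d+2,2), 15), where C(d+2,2) = (d+2)(d+1)/2. Equivalently, the h-vector of Z(H₃) is (1,2,3,4,5): the Hilbert function of ℂ[x,y,z]/I(Z(H₃)) takes the values 1, 3, 6, 10, 15, 15, 15, … in degrees 0, 1, 2, 3, 4, 5, 6, …. -/

import Mathlib

open MvPolynomial

/-- The 15 points of the `H₃` root-system configuration. -/
noncomputable def H3pts (u : ℂ) : Fin 15 → (Fin 3 → ℂ) :=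
  ![![1,0,0], ![0,1,0], ![0,0,1],
    ![1,u,u^2], ![-1,u,u^2], ![1,-u,u^2], ![1,u,-u^2],
    ![u,-u^2,1], ![-u,u^2,1], ![u,u^2,-1], ![u,u^2,1],
    ![u^2,1,-u], ![u^2,-1,u], ![-u^2,1,u], ![u^2,1,u]]

/-- The `ℂ`-vector space of homogeneous polynomials of degree `d` in `ℂ[x,y,z]`
vanishing at all 15 points of `Z(H₃)`. -/
noncomputable def H3V (u : ℂ) (d : ℕ) : Submodule ℂ (MvPolynomial (Fin 3) ℂ) :=
  homogeneousSubmodule (Fin 3) ℂ d ⊓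
    ⨅ i : Fin 15, LinearMap.ker (aeval (R := ℂ) (H3pts u i)).toLinearMap

/-- Coefficients of the six lines (dual to the five-fold axes of the icosahedron). -/
noncomputable def H3lin (u : ℂ) : Fin 6 → (Fin 3 → ℂ) :=
  ![![0,u,-1], ![0,u,1], ![1,0,-u], ![1,0,u], ![u,-1,0], ![u,1,0]]

/-- The two lines through each point: `Z(H₃)` is a star configuration. -/
def H3a : Fin 15 → Finset (Fin 6) :=
  ![{0,1}, {2,3}, {4,5}, {0,4}, {0,5}, {1,5}, {1,4}, {2,5}, {3,5}, {3,4}, {2,4},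
    {1,3}, {1,2}, {0,3}, {0,2}]

/-- A coordinate not vanishing at each point. -/
def H3c : Fin 15 → Fin 3 := ![0, 1, 2, 2, 2, 2, 2, 2, 2, 2, 2, 2, 2, 2, 2]

noncomputable def H3form (u : ℂ) (k : Fin 6) : MvPolynomial (Fin 3) ℂ :=
  ∑ j, C (H3lin u k j) * X j

lemma H3form_hom (u : ℂ) (k : Fin 6) : (H3form u k).IsHomogeneous 1 :=
  IsHomogeneous.sum _ _ _ fun j _ => isHomogeneous_C_mul_X _ j

lemma H3_u_ne {u : ℂ} (hu : u ^ 2 = u + 1) : u ≠ 0 := by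
  rintro rfl; norm_num at hu

set_option maxHeartbeats 4000000 in
lemma H3form_eval {u : ℂ} (hu : u ^ 2 = u + 1) (k : Fin 6) (i : Fin 15) :
    aeval (H3pts u i) (H3form u k) = 0 ↔ k ∈ H3a i := by
  have h0 := H3_u_ne hu
  have h1 : u + 1 ≠ 0 := by rw [← hu]; exact pow_ne_zero 2 h0
  have e : aeval (H3pts u i) (H3form u k) = ∑ j, H3lin u k j * H3pts u i j := by
    simp [H3form]
  rw [e, Fin.sum_univ_three]
  fin_cases k <;> fin_cases i <;> simp [H3lin, H3pts, H3a] <;> grind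

lemma H3c_ne {u : ℂ} (hu : u ^ 2 = u + 1) (i : Fin 15) : H3pts u i (H3c i) ≠ 0 := by
  have h0 := H3_u_ne hu
  fin_cases i <;> simp [H3pts, H3c, h0]

noncomputable def H3sep (u : ℂ) (n : ℕ) (i : Fin 15) : MvPolynomial (Fin 3) ℂ :=
  (∏ k ∈ (H3a i)ᶜ, H3form u k) * X (H3c i) ^ n

lemma H3sep_hom (u : ℂ) (n : ℕ) (i : Fin 15) : (H3sep u n i).IsHomogeneous (4 + n) := by
  have h : ∑ k ∈ (H3a i)ᶜ, 1 = 4 := by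
    revert i; decide
  have h1 := IsHomogeneous.prod (H3a i)ᶜ (H3form u) (fun _ => 1) fun k _ => H3form_hom u k
  rw [h] at h1
  exact h1.mul (isHomogeneous_X_pow _ _)

lemma H3sep_eval {u : ℂ} (hu : u ^ 2 = u + 1) (n : ℕ) (i j : Fin 15) :
    aeval (H3pts u j) (H3sep u n i) ≠ 0 ↔ i = j := by
  have hc : ∀ i j : Fin 15, (∀ k ∈ (H3a i)ᶜ, k ∉ H3a j) ↔ i = j := by decide
  rw [← hc i j]
  constructor
  · intro h k hk hkj
    apply h
    rw [H3sep, map_mul, map_prod, Finset.prod_eq_zero hk ((H3form_eval hu k j).2 hkj), zero_mul]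
  · intro h
    have hij := (hc i j).1 h
    subst hij
    rw [H3sep, map_mul, map_prod, map_pow, aeval_X]
    refine mul_ne_zero (Finset.prod_ne_zero_iff.2 fun k hk h0 => h k hk ((H3form_eval hu k i).1 h0))
      (pow_ne_zero _ (H3c_ne hu i))

/-- Evaluation of degree `d` forms at the 15 points. -/
noncomputable def H3ev (u : ℂ) (d : ℕ) :
    homogeneousSubmodule (Fin 3) ℂ d →ₗ[ℂ] (Fin 15 → ℂ) :=
  (LinearMap.pi fun i => (aeval (R := ℂ) (H3pts u i)).toLinearMap) ∘ₗ Submodule.subtype _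

lemma H3ev_surj {u : ℂ} (hu : u ^ 2 = u + 1) (n : ℕ) :
    Function.Surjective (H3ev u (4 + n)) := by
  intro y
  refine ⟨∑ i, (y i / aeval (H3pts u i) (H3sep u n i)) •
    (⟨H3sep u n i, H3sep_hom u n i⟩ : homogeneousSubmodule (Fin 3) ℂ (4 + n)), ?_⟩
  ext j
  rw [map_sum, Finset.sum_apply, Finset.sum_eq_single j]
  · have := (H3sep_eval hu n j j).2 rfl
    simp only [map_smul, Pi.smul_apply, smul_eq_mul]
    exact div_mul_cancel₀ _ this
  · intro i _ hij
    have : aeval (H3pts u j) (H3sep u n i) = 0 := by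
      by_contra h
      exact hij ((H3sep_eval hu n i j).1 h)
    simp only [map_smul, Pi.smul_apply, smul_eq_mul]
    exact mul_eq_zero_of_right _ this
  · simp

lemma H3_finrank_hom (d : ℕ) :
    Module.finrank ℂ (homogeneousSubmodule (Fin 3) ℂ d) = Nat.choose (d + 2) 2 := by
  rw [homogeneousSubmodule_eq_finsupp_supported]
  have hs : {e : Fin 3 →₀ ℕ | e.degree = d} =
      ((Finset.finsuppAntidiag Finset.univ d : Finset (Fin 3 →₀ ℕ)) : Set (Fin 3 →₀ ℕ)) := by
    ext e
    simp [Finset.mem_finsuppAntidiag, Finsupp.degree_eq_sum]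
  rw [hs, (AddMonoidAlgebra.supportedEquivFinsupp _).finrank_eq]
  rw [Module.finrank_finsupp_self, ← Nat.card_eq_fintype_card, Nat.card_coe_set_eq,
    Set.ncard_coe_finset, Finset.card_finsuppAntidiag_nat_eq_choose, Finset.card_univ,
    Fintype.card_fin, show 3 + d - 1 = d + 2 by omega, Nat.choose_symm_add]

instance H3_finite (d : ℕ) : Module.Finite ℂ (homogeneousSubmodule (Fin 3) ℂ d) :=
  Module.Finite.iff_fg.2 (homogeneousSubmodule_fg _ _ d)

lemma H3V_eq (u : ℂ) (d : ℕ) :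
    H3V u d = (LinearMap.ker (H3ev u d)).map (Submodule.subtype _) := by
  ext p
  simp [H3V, H3ev, _root_.funext_iff, and_comm]

lemma H3V_finrank (u : ℂ) (d : ℕ) :
    Module.finrank ℂ (H3V u d) = Module.finrank ℂ (LinearMap.ker (H3ev u d)) := by
  rw [H3V_eq]
  exact Submodule.finrank_map_subtype_eq _ _

lemma H3V_large {u : ℂ} (hu : u ^ 2 = u + 1) (n : ℕ) :
    Module.finrank ℂ (H3V u (4 + n)) + 15 = Nat.choose (4 + n + 2) 2 := by
  have h := LinearMap.finrank_range_add_finrank_ker (H3ev u (4 + n))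
  rw [LinearMap.range_eq_top.2 (H3ev_surj hu n), finrank_top, H3_finrank_hom] at h
  rw [H3V_finrank, ← h]
  simp [add_comm]

lemma H3V_four {u : ℂ} (hu : u ^ 2 = u + 1) : H3V u 4 = ⊥ := by
  have h := H3V_large hu 0
  have h2 : Nat.choose (4 + 0 + 2) 2 = 15 := by decide
  rw [H3V_finrank] at h
  have h3 : LinearMap.ker (H3ev u 4) = ⊥ := Submodule.finrank_eq_zero.1 (by simpa [h2] using h)
  rw [H3V_eq, h3, Submodule.map_bot]

lemma H3V_small {u : ℂ} (hu : u ^ 2 = u + 1) {d : ℕ} (hd : d ≤ 4) : H3V u d = ⊥ := by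
  rw [eq_bot_iff]
  intro p hp
  have hq : p * X 0 ^ (4 - d) ∈ H3V u 4 := by
    rw [H3V, Submodule.mem_inf, Submodule.mem_iInf] at hp ⊢
    refine ⟨?_, fun i => ?_⟩
    · have := IsHomogeneous.mul hp.1 (isHomogeneous_X_pow (R := ℂ) (0 : Fin 3) (4 - d))
      rwa [Nat.add_sub_cancel' hd] at this
    · have := hp.2 i
      simp only [LinearMap.mem_ker, AlgHom.toLinearMap_apply] at this ⊢
      rw [map_mul, this, zero_mul]
  rw [H3V_four hu, Submodule.mem_bot] at hq
  rcases mul_eq_zero.1 hq with h | h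
  · exact h
  · exact absurd h (pow_ne_zero _ (X_ne_zero _))

/-- For every degree `d`, the space of homogeneous degree-`d` polynomials vanishing at the
15 points of `Z(H₃)` has dimension `C(d+2,2) − min (C(d+2,2)) 15`; equivalently, the
`h`-vector of `Z(H₃)` is `(1,2,3,4,5)`. -/
theorem H3_hilbert_function (u : ℂ) (hu : u ^ 2 = u + 1) (d : ℕ) :
    Module.finrank ℂ (H3V u d) =
      Nat.choose (d + 2) 2 - min (Nat.choose (d + 2) 2) 15 := by
  rcases le_total d 4 with hd | hd
  · have h : Nat.choose (d + 2) 2 ≤ Nat.choose 6 2 := Nat.choose_le_choose 2 (by omega)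
    have h6 : Nat.choose 6 2 = 15 := by decide
    rw [H3V_small hu hd, finrank_bot]
    omega
  · obtain ⟨n, rfl⟩ := Nat.exists_eq_add_of_le hd
    have := H3V_large hu n
    omega
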